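/- Let L ≥ 2, 0 ≤ N ≤ L be integers, let 0 < q < 1 and let β, b be real numbers. Consider site rates β_1 = 0, β_n = b for 2 ≤ n ≤ L−1 and β_L = β, and let P_N be the normalized closed-ASEP stationary measure on N-element subsets of {1,...,L}. Then the sector-N expectation B_N = ∑_{B} P_N(B) ∑_{n ∈ B} β_n equals ( b(N−1) + β + (b − β) q^N − b q^{L−N} + (b − bN) q^L ) / (1 − q^L). -/

import Mathlib

/-!
The total rate on an `N`-particle configuration `B` is `b N - b [1 ∈ B] + (β - b) [L ∈ B]`, so only
the occupation probabilities of the first and the last site are needed.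

Write `Z L N = ∑_{B ∈ W L N} q ^ w(B)`. Removing site `L + 1` from `{1, ..., L + 1}` leaves
`{1, ..., L}` and the weight changes by a factor depending only on `L` and `N`; removing `1` and
shifting the rest down does the same. Hence configurations in the sector `(L + 1, N + 1)` with the
last site occupied have total weight `Z L N`, and those with the first site occupied have total
weight `q ^ (L - N) Z L N`. The two decompositions give the two `q`-Pascal rules
`Z (L+1) (N+1) = Z L N + q ^ (N+1) Z L (N+1) = q ^ (L-N) Z L N + Z L (N+1)`,
and eliminating `Z L (N+1)` yields `(1 - q ^ (N+1)) Z (L+1) (N+1) = (1 - q ^ (L+1)) Z L N`.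
This identity both evaluates `Z` as the `q`-binomial coefficient and gives the two occupation
probabilities.
-/

open Finset

/-- The set of sites `{1, ..., L}`. -/
def sites (L : ℕ) : Finset ℕ := Finset.Icc 1 L

/-- `W L N` : the collection of `N`-element subsets of `{1, ..., L}`
(the `N`-particle sector). -/
def W (L N : ℕ) : Finset (Finset ℕ) := Finset.powersetCard N (sites L)

/-- The exponent `w(B) = ∑_{j=1}^N (L − j + 1 − n_j)` for `B = {n_1 < ... < n_N}`,
written as `∑_{n ∈ B} (L + 1 − n) − ∑_{j=1}^N j`. -/
def wgt (L : ℕ) (B : Finset ℕ) : ℤ :=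
  (∑ n ∈ B, ((L : ℤ) + 1 - (n : ℤ))) - ((B.card * (B.card + 1)) / 2 : ℕ)

/-- The partition function of the `N`-particle sector on `L` sites. -/
noncomputable def partFn (q : ℝ) (L N : ℕ) : ℝ := ∑ B ∈ W L N, q ^ wgt L B

/-- The translation `n ↦ n + 1` of sites. -/
def siteShift : ℕ ↪ ℕ := addRightEmbedding 1

lemma sites_succ_last (L : ℕ) : sites (L + 1) = insert (L + 1) (sites L) := by
  ext n; simp only [sites, mem_insert, mem_Icc]; omega

lemma sites_succ_first (L : ℕ) : sites (L + 1) = insert 1 ((sites L).map siteShift) := by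
  ext n
  simp only [sites, siteShift, mem_insert, mem_Icc, mem_map, addRightEmbedding_apply]
  constructor
  · intro h
    by_cases h1 : n = 1
    · exact Or.inl h1
    · exact Or.inr ⟨n - 1, by omega, by omega⟩
  · rintro (h | ⟨m, h, rfl⟩) <;> omega

lemma last_notMem (L : ℕ) : L + 1 ∉ sites L := by simp [sites]

lemma first_notMem (L : ℕ) : 1 ∉ (sites L).map siteShift := by
  simp [sites, siteShift]

/-- Splitting a sum over `(k + 1)`-subsets of `insert x s` according to whether `x` belongs to
the subset. -/
lemma sum_powersetCard_insert {s : Finset ℕ} {x : ℕ} (hx : x ∉ s) (k : ℕ) (f : Finset ℕ → ℝ) :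
    ∑ B ∈ powersetCard (k + 1) (insert x s), f B
      = ∑ B ∈ powersetCard (k + 1) s, f B + ∑ B ∈ powersetCard k s, f (insert x B) := by
  have hmem : ∀ {j : ℕ} {B : Finset ℕ}, B ∈ powersetCard j s → x ∉ B := fun hB h =>
    hx ((mem_powersetCard.1 hB).1 h)
  rw [powersetCard_succ_insert hx, sum_union, sum_image]
  · intro A hA B hB h
    have := congrArg (fun C => Finset.erase C x) h
    simpa [erase_insert (hmem hA), erase_insert (hmem hB)] using this
  · rw [disjoint_left]
    intro B hB hB'
    obtain ⟨A, -, rfl⟩ := mem_image.1 hB'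
    exact hmem hB (mem_insert_self x A)

lemma sum_powersetCard_insert_mem {s : Finset ℕ} {x : ℕ} (hx : x ∉ s) (k : ℕ)
    (f : Finset ℕ → ℝ) :
    ∑ B ∈ powersetCard (k + 1) (insert x s), (if x ∈ B then f B else 0)
      = ∑ B ∈ powersetCard k s, f (insert x B) := by
  rw [sum_powersetCard_insert hx, sum_eq_zero, zero_add]
  · simp
  · intro B hB
    exact if_neg fun h => hx ((mem_powersetCard.1 hB).1 h)

lemma sum_powersetCard_shift (s : Finset ℕ) (k : ℕ) (f : Finset ℕ → ℝ) :
    ∑ B ∈ powersetCard k (s.map siteShift), f B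
      = ∑ B ∈ powersetCard k s, f (B.map siteShift) := by
  rw [powersetCard_map, sum_map]
  rfl

lemma triangle_succ (c : ℕ) :
    (c + 1) * (c + 1 + 1) / 2 = c * (c + 1) / 2 + (c + 1) := by
  rw [show (c + 1) * (c + 1 + 1) = c * (c + 1) + (c + 1) * 2 by ring,
    Nat.add_mul_div_right _ _ two_pos]

lemma wgt_succ (L : ℕ) (B : Finset ℕ) : wgt (L + 1) B = wgt L B + B.card := by
  have : ∀ n ∈ B, (((L + 1 : ℕ) : ℤ) + 1 - (n : ℤ)) = ((L : ℤ) + 1 - n) + 1 := by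
    intro n _; push_cast; ring
  rw [wgt, wgt, sum_congr rfl this, sum_add_distrib]
  simp only [sum_const, nsmul_eq_mul, mul_one]
  ring

lemma wgt_insert (L : ℕ) {x : ℕ} {B : Finset ℕ} (hx : x ∉ B) :
    wgt L (insert x B) = wgt L B + (L - x - B.card) := by
  rw [wgt, wgt, sum_insert hx, card_insert_of_notMem hx, triangle_succ]
  push_cast
  ring

lemma wgt_shift (L : ℕ) (B : Finset ℕ) : wgt (L + 1) (B.map siteShift) = wgt L B := by
  simp only [wgt, sum_map, card_map, siteShift, addRightEmbedding_apply]
  congr 1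
  exact sum_congr rfl fun n _ => by push_cast; ring

section

variable {q : ℝ}

/-- Total weight of the configurations whose last site is occupied. -/
lemma sum_last (L N : ℕ) :
    ∑ B ∈ W (L + 1) (N + 1), (if L + 1 ∈ B then q ^ wgt (L + 1) B else 0) = partFn q L N := by
  rw [W, sites_succ_last, sum_powersetCard_insert_mem (last_notMem L), partFn, W]
  refine sum_congr rfl fun B hB => ?_
  rw [wgt_insert _ fun h => last_notMem L ((mem_powersetCard.1 hB).1 h), wgt_succ]
  congr 1
  push_cast
  ring

/-- Total weight of the configurations whose first site is occupied. -/
lemma sum_first (hq : q ≠ 0) (L N : ℕ) :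
    ∑ B ∈ W (L + 1) (N + 1), (if 1 ∈ B then q ^ wgt (L + 1) B else 0)
      = q ^ ((L : ℤ) - N) * partFn q L N := by
  rw [W, sites_succ_first, sum_powersetCard_insert_mem (first_notMem L), sum_powersetCard_shift,
    partFn, W, mul_sum]
  refine sum_congr rfl fun B hB => ?_
  obtain ⟨hs, hc⟩ := mem_powersetCard.1 hB
  rw [wgt_insert _ fun h => first_notMem L (map_subset_map.2 hs h), wgt_shift, card_map, hc,
    ← zpow_add₀ hq]
  congr 1
  push_cast
  ring

lemma partFn_pascal_last (hq : q ≠ 0) (L N : ℕ) :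
    partFn q (L + 1) (N + 1) = partFn q L N + q ^ (N + 1) * partFn q L (N + 1) := by
  rw [← sum_last L N, partFn, W, sites_succ_last, sum_powersetCard_insert (last_notMem L),
    sum_powersetCard_insert_mem (last_notMem L), add_comm, partFn, W, mul_sum]
  congr 1
  refine sum_congr rfl fun B hB => ?_
  rw [wgt_succ, (mem_powersetCard.1 hB).2, zpow_add₀ hq, zpow_natCast, mul_comm]

lemma partFn_pascal_first (hq : q ≠ 0) (L N : ℕ) :
    partFn q (L + 1) (N + 1) = q ^ ((L : ℤ) - N) * partFn q L N + partFn q L (N + 1) := by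
  rw [← sum_first hq, partFn, W, sites_succ_first, sum_powersetCard_insert (first_notMem L),
    sum_powersetCard_insert_mem (first_notMem L), add_comm, sum_powersetCard_shift, partFn, W]
  simp only [sum_powersetCard_shift, wgt_shift]

lemma partFn_succ_succ (hq : q ≠ 0) (L N : ℕ) :
    (1 - q ^ (N + 1)) * partFn q (L + 1) (N + 1) = (1 - q ^ (L + 1)) * partFn q L N := by
  have h1 := partFn_pascal_last hq L N
  have h2 := partFn_pascal_first hq L N
  have h3 : q ^ (N + 1) * q ^ ((L : ℤ) - N) = q ^ (L + 1) := by
    rw [← zpow_natCast, ← zpow_natCast, ← zpow_add₀ hq]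
    congr 1
    push_cast
    ring
  linear_combination h1 - q ^ (N + 1) * h2 - partFn q L N * h3

/-- The partition function is the `q`-binomial coefficient. -/
lemma partFn_eq (hq0 : 0 < q) (hq1 : q < 1) (N : ℕ) : ∀ L, N ≤ L →
    partFn q L N = ∏ i ∈ Finset.Icc 1 N, (1 - q ^ (L - N + i)) / (1 - q ^ i) := by
  induction N with
  | zero => intro L _; simp [partFn, W, wgt]
  | succ N ih =>
    intro L hL
    obtain ⟨L, rfl⟩ : ∃ M, L = M + 1 := ⟨L - 1, by omega⟩
    have hne : 1 - q ^ (N + 1) ≠ 0 := (sub_pos.2 (pow_lt_one₀ hq0.le hq1 (by omega))).ne'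
    rw [prod_Icc_succ_top (by omega), show L + 1 - (N + 1) = L - N by omega,
      ← ih L (by omega), show L - N + (N + 1) = L + 1 by omega, mul_div_assoc', eq_div_iff hne,
      mul_comm, partFn_succ_succ hq0.ne', mul_comm]

lemma partFn_pos (hq0 : 0 < q) (hq1 : q < 1) {L N : ℕ} (h : N ≤ L) : 0 < partFn q L N := by
  rw [partFn_eq hq0 hq1 N L h]
  refine prod_pos fun i hi => ?_
  have := (mem_Icc.1 hi).1
  exact div_pos (sub_pos.2 (pow_lt_one₀ hq0.le hq1 (by omega)))
    (sub_pos.2 (pow_lt_one₀ hq0.le hq1 (by omega)))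

end

/-- The total rate depends on `B` only through its size and the occupation of the two end sites.
The hypothesis `2 ≤ L` makes the end sites distinct. -/
lemma rate_eq {L : ℕ} (hL : 2 ≤ L) (β b : ℝ) (B : Finset ℕ) :
    (∑ n ∈ B, if n = 1 then 0 else if n = L then β else b)
      = b * B.card - b * (if 1 ∈ B then 1 else 0) + (β - b) * (if L ∈ B then 1 else 0) := by
  have h : ∀ n ∈ B, (if n = 1 then 0 else if n = L then β else b)
      = b - (if n = 1 then b else 0) + (if n = L then β - b else 0) := by
    intro n _
    by_cases h1 : n = 1
    · simp [h1, show 1 ≠ L by omega]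
    · rw [if_neg h1, if_neg h1]
      split_ifs <;> ring
  rw [sum_congr rfl h, sum_add_distrib, sum_sub_distrib, sum_ite_eq', sum_ite_eq']
  simp [mul_comm]

/-- for site rates `β_1 = 0`, `β_n = b` for `2 ≤ n ≤ L−1`, `β_L = β`, the
sector-`N` expectation of the total desorption rate under the normalized closed-ASEP
stationary measure `P_N(B) = q^{w(B)}/[L choose N]_q` is
`B_N = (b(N−1) + β + (b − β) q^N − b q^{L−N} + (b − bN) q^L)/(1 − q^L)`. -/
theorem stmt18 (L N : ℕ) (hL : 2 ≤ L) (hN : N ≤ L) (q β b : ℝ)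
    (hq0 : 0 < q) (hq1 : q < 1) :
    ∑ B ∈ W L N,
        (q ^ wgt L B / ∏ i ∈ Finset.Icc 1 N, (1 - q ^ (L - N + i)) / (1 - q ^ i)) *
          (∑ n ∈ B, if n = 1 then 0 else if n = L then β else b)
      = (b * ((N : ℝ) - 1) + β + (b - β) * q ^ N - b * q ^ (L - N)
          + (b - b * (N : ℝ)) * q ^ L) / (1 - q ^ L) := by
  rw [← partFn_eq hq0 hq1 N L hN]
  obtain _ | N := N
  · simp [W]
  obtain ⟨L, rfl⟩ : ∃ M, L = M + 1 := ⟨L - 1, by omega⟩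
  have hZ := (partFn_pos hq0 hq1 hN).ne'
  have hne : 1 - q ^ (L + 1) ≠ 0 := (sub_pos.2 (pow_lt_one₀ hq0.le hq1 (by omega))).ne'
  have hpow : q ^ ((L : ℤ) - N) = q ^ (L - N) := by
    rw [← zpow_natCast, Nat.cast_sub (by omega)]
  have hrec := partFn_succ_succ hq0.ne' L N
  have hlast := sum_last (q := q) L N
  have hfirst := sum_first hq0.ne' L N
  rw [hpow] at hfirst
  have hsum : ∑ B ∈ W (L + 1) (N + 1),
        (q ^ wgt (L + 1) B / partFn q (L + 1) (N + 1)) *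
          (∑ n ∈ B, if n = 1 then 0 else if n = L + 1 then β else b)
      = (b * ((N + 1 : ℕ) : ℝ) * partFn q (L + 1) (N + 1) - b * (q ^ (L - N) * partFn q L N)
          + (β - b) * partFn q L N) / partFn q (L + 1) (N + 1) := by
    rw [← hfirst]
    conv_rhs => rw [← hlast]
    conv_rhs => enter [1, 1, 1, 2]; rw [partFn]
    rw [mul_sum, mul_sum, mul_sum, ← sum_sub_distrib, ← sum_add_distrib, sum_div]
    refine sum_congr rfl fun B hB => ?_
    rw [rate_eq hL, (mem_powersetCard.1 hB).2]
    split_ifs <;> ring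
  rw [hsum, div_eq_div_iff hZ hne, show L + 1 - (N + 1) = L - N by omega]
  have hp : q ^ (L - N) * q ^ (N + 1) = q ^ (L + 1) := by
    rw [← pow_add]; congr 1; omega
  push_cast
  linear_combination (b * q ^ (L - N) - (β - b)) * hrec
    + b * partFn q (L + 1) (N + 1) * hp
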